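/- arXiv:2207.00766 — 2 statements merged into one kernel-verified Lean document; each statement's English description precedes it below -/
import Mathlib

section
/- Fix an integer q ≥ 2. Let (h_k)_{k≥0} be the rational sequence defined by h_0 = 1 and h_k = ((q-1)k+1)/k · Σ_{j_1+…+j_q = k−1, j_i ≥ 0} h_{j_1}⋯h_{j_q} for k ≥ 1, and define d_k := k!·h_k/((q-1)k+1) for k ≥ 1. Then for every k ≥ 1, ((q-1)k+1)·d_k = q^k·((q-1)k+1)^{k-1}; equivalently, d_k = q^k·((q-1)k+1)^{k-2} for every k ≥ 2 and d_1 = 1. -/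
/-!
With `A_n(y) = y (y + a n)^(n-1) / n!` the derivative of `A_(n+1)` is `A_n(y + a)`, and induction
on `n` gives Abel's identity `∑_{i+j=n} A_i(y) A_j(z) = A_n(y + z)`. So `F_y = ∑ A_n(y) x^n`
satisfies `F_(y+z) = F_y F_z`, whence `F_1 ^ q = F_q`. For `a = q - 1` the number `A_n(q)` is, up to
an explicit factor, `A_(n+1)(1)`, and this is the recurrence of `h`: thus `h_k = q^k A_k(1)`.
-/

open Polynomial
open scoped PowerSeries

section Antidiagonal

variable {R : Type*} [CommSemiring R]

theorem coeff_prod_eq_sum_antidiagonalTuple {m : ℕ} (n : ℕ) (f : Fin m → R⟦X⟧) :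
    PowerSeries.coeff n (∏ i, f i)
      = ∑ j ∈ Finset.Nat.antidiagonalTuple m n, ∏ i, PowerSeries.coeff (j i) (f i) := by
  rw [PowerSeries.coeff_prod]
  refine Finset.sum_equiv Finsupp.equivFunOnFinite (fun l ↦ ?_) fun l _ ↦ rfl
  simp [Finset.Nat.mem_antidiagonalTuple]

theorem eq_of_antidiagonalTuple_recurrence {m : ℕ} {c f g : ℕ → R} (h0 : f 0 = g 0)
    (hf : ∀ n, f (n + 1) = c n * ∑ j ∈ Finset.Nat.antidiagonalTuple m n, ∏ i, f (j i))
    (hg : ∀ n, g (n + 1) = c n * ∑ j ∈ Finset.Nat.antidiagonalTuple m n, ∏ i, g (j i)) :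
    f = g := by
  funext n
  induction n using Nat.strong_induction_on with
  | _ n ih =>
    cases n with
    | zero => exact h0
    | succ n =>
      rw [hf, hg]
      congr 1
      refine Finset.sum_congr rfl fun j hj ↦ Finset.prod_congr rfl fun i _ ↦ ih _ ?_
      rw [← Finset.Nat.mem_antidiagonalTuple.mp hj]
      exact Nat.lt_succ_of_le (Finset.single_le_sum_of_canonicallyOrdered (Finset.mem_univ i))

end Antidiagonal

theorem eq_of_derivative_eq_of_eval_zero_eq {R : Type*} [CommRing R] [IsAddTorsionFree R]
    {p r : R[X]} (hderiv : derivative p = derivative r) (h0 : p.eval 0 = r.eval 0) : p = r := by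
  have hconst := eq_C_of_derivative_eq_zero (p := p - r) (by rw [derivative_sub, hderiv, sub_self])
  rw [coeff_zero_eq_eval_zero, eval_sub, h0, sub_self, map_zero] at hconst
  exact sub_eq_zero.mp hconst

section Abel

variable {K : Type*} [Field K]

/-- The Abel polynomial `X (X + a n)^(n-1)`, divided by `n!` so that the sequence behaves under
convolution like the coefficients of an exponential. The case `n = 0`, where the formula
reads `X / X`, is listed separately. -/
noncomputable def abelPoly (a : K) : ℕ → K[X]
  | 0 => 1
  | n + 1 => C ((n + 1).factorial : K)⁻¹ * (X * (X + C (a * (n + 1))) ^ n)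

@[simp]
theorem abelPoly_zero (a : K) : abelPoly a 0 = 1 := rfl

theorem eval_abelPoly_succ (a y : K) (n : ℕ) :
    (abelPoly a (n + 1)).eval y = y * (y + a * (n + 1)) ^ n / (n + 1).factorial := by
  simp [abelPoly, div_eq_inv_mul]

@[simp]
theorem eval_zero_abelPoly_succ (a : K) (n : ℕ) : (abelPoly a (n + 1)).eval 0 = 0 := by
  simp [eval_abelPoly_succ]

theorem eval_one_abelPoly (a : K) (n : ℕ) :
    (abelPoly a n).eval 1 = (a * n + 1) ^ (n - 1) / n.factorial := by
  cases n with
  | zero => simp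
  | succ n => simp [eval_abelPoly_succ, add_comm]

/-- The generating function `∑ A_n(y) x^n` of the normalized Abel polynomials evaluated at `y`. -/
noncomputable def abelSeries (a y : K) : K⟦X⟧ :=
  PowerSeries.mk fun n ↦ (abelPoly a n).eval y

theorem abelSeries_zero (a : K) : abelSeries a 0 = 1 := by
  ext n
  cases n <;> simp [abelSeries, PowerSeries.coeff_one]

variable [CharZero K]

theorem inv_factorial_eq_inv_factorial_succ_mul (n : ℕ) :
    (n.factorial : K)⁻¹ = ((n + 1).factorial : K)⁻¹ * (n + 1) := by
  have hn : (n + 1 : K) ≠ 0 := n.cast_add_one_ne_zero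
  rw [Nat.factorial_succ, Nat.cast_mul, Nat.cast_succ, mul_inv_rev, inv_mul_cancel_right₀ hn]

theorem derivative_abelPoly_succ (a : K) (n : ℕ) :
    derivative (abelPoly a (n + 1)) = (abelPoly a n).comp (X + C a) := by
  cases n with
  | zero => simp [abelPoly]
  | succ n =>
    have hfact : (C ((n + 1).factorial : K)⁻¹ : K[X])
        = C ((n + 1 + 1).factorial : K)⁻¹ * (n + 1 + 1) := by
      rw [inv_factorial_eq_inv_factorial_succ_mul, C_mul]
      simp
    simp only [abelPoly, hfact]
    simp only [Nat.cast_add, Nat.cast_one, map_mul, map_add, map_natCast, map_one, derivative_mul,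
      derivative_C, zero_mul, derivative_X, one_mul, derivative_pow, add_tsub_cancel_right,
      derivative_natCast, derivative_one, add_zero, mul_zero, mul_one, zero_add,
      mul_comp, C_comp, add_comp, natCast_comp, one_comp, X_comp, pow_comp]
    ring

theorem mul_eval_abelPoly_succ (a y : K) (n : ℕ) :
    (y + a) * ((n + 1) * (abelPoly a (n + 1)).eval y)
      = y * (y + a * (n + 1)) * (abelPoly a n).eval (y + a) := by
  cases n with
  | zero => simp [eval_abelPoly_succ, mul_comm]
  | succ n =>
    rw [eval_abelPoly_succ, eval_abelPoly_succ, div_eq_mul_inv _ ((n + 1).factorial : K),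
      inv_factorial_eq_inv_factorial_succ_mul (n + 1)]
    push_cast
    ring

theorem sum_antidiagonal_abelPoly (a z : K) (n : ℕ) :
    ∑ ij ∈ Finset.HasAntidiagonal.antidiagonal n, abelPoly a ij.1 * C ((abelPoly a ij.2).eval z)
      = (abelPoly a n).comp (X + C z) := by
  induction n with
  | zero => simp
  | succ n ih =>
    apply eq_of_derivative_eq_of_eval_zero_eq
    · have hshift := congrArg (·.comp (X + C a)) ih
      simp only [sum_comp, mul_comp, C_comp, comp_assoc] at hshift
      simp [Finset.Nat.sum_antidiagonal_succ, derivative_comp, derivative_abelPoly_succ, hshift,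
        comp_assoc, add_right_comm]
    · simp [Finset.Nat.sum_antidiagonal_succ, eval_finsetSum]

theorem abelSeries_add (a y z : K) :
    abelSeries a (y + z) = abelSeries a y * abelSeries a z := by
  ext n
  have habel := congrArg (eval y) (sum_antidiagonal_abelPoly a z n)
  simpa [abelSeries, PowerSeries.coeff_mul, eval_finsetSum] using habel.symm

theorem abelSeries_pow (a y : K) (m : ℕ) : abelSeries a y ^ m = abelSeries a (m * y) := by
  induction m with
  | zero => simp [abelSeries_zero]
  | succ m ih => rw [pow_succ, ih, ← abelSeries_add, Nat.cast_succ, add_one_mul]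

theorem sum_antidiagonalTuple_prod_abelPoly (a b y : K) (m n : ℕ) :
    ∑ j ∈ Finset.Nat.antidiagonalTuple m n, ∏ i, b ^ j i * (abelPoly a (j i)).eval y
      = b ^ n * (abelPoly a n).eval (m * y) := by
  have hcoeff := coeff_prod_eq_sum_antidiagonalTuple n
    fun _ : Fin m ↦ PowerSeries.rescale b (abelSeries a y)
  rw [Fin.prod_const, ← map_pow, abelSeries_pow] at hcoeff
  simpa [abelSeries] using hcoeff.symm

theorem abelPoly_recurrence {a : K} {q : ℕ} (ha : (q : K) = 1 + a) (n : ℕ) :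
    (q : K) ^ (n + 1) * (abelPoly a (n + 1)).eval 1
      = (a * (n + 1) + 1) / (n + 1) * ∑ j ∈ Finset.Nat.antidiagonalTuple q n,
          ∏ i, (q : K) ^ j i * (abelPoly a (j i)).eval 1 := by
  have hshift := mul_eval_abelPoly_succ a 1 n
  rw [← ha] at hshift
  have hn : (n + 1 : K) ≠ 0 := n.cast_add_one_ne_zero
  rw [sum_antidiagonalTuple_prod_abelPoly, mul_one, div_mul_eq_mul_div, eq_div_iff hn]
  linear_combination (q : K) ^ n * hshift

end Abel

theorem eq_closedForm_of_chain_recurrence {K : Type*} [Field K] [CharZero K] {q : ℕ} (hq : 1 ≤ q)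
    {h : ℕ → K} (h0 : h 0 = 1)
    (hrec : ∀ k : ℕ, 1 ≤ k →
      h k = ((((q - 1) * k + 1 : ℕ) : K) / (k : K)) *
        ∑ j ∈ Finset.Nat.antidiagonalTuple q (k - 1), ∏ i : Fin q, h (j i)) (k : ℕ) :
    h k = (q : K) ^ k * (((q - 1) * k + 1 : ℕ) : K) ^ (k - 1) / k.factorial := by
  have ha : (q : K) = 1 + (q - 1 : ℕ) := by rw [Nat.cast_pred hq]; ring
  have hclosed : h = fun k ↦ (q : K) ^ k * (abelPoly ((q - 1 : ℕ) : K) k).eval 1 :=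
    eq_of_antidiagonalTuple_recurrence (by simp [h0])
      (fun n ↦ by simpa using hrec (n + 1) n.succ_pos) (abelPoly_recurrence ha)
  simp [hclosed, eval_one_abelPoly, mul_div_assoc]

theorem stmt_1_general {K : Type*} [Field K] [CharZero K] (q : ℕ) (hq : 1 ≤ q) (h : ℕ → K)
    (h0 : h 0 = 1)
    (hrec : ∀ k : ℕ, 1 ≤ k →
      h k = ((((q - 1) * k + 1 : ℕ) : K) / (k : K)) *
        ∑ j ∈ Finset.Nat.antidiagonalTuple q (k - 1), ∏ i : Fin q, h (j i))
    (d : ℕ → K)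
    (hd : ∀ k : ℕ, 1 ≤ k →
      d k = (Nat.factorial k : K) * h k / (((q - 1) * k + 1 : ℕ) : K)) :
    (∀ k : ℕ, 1 ≤ k →
        (((q - 1) * k + 1 : ℕ) : K) * d k = (q : K) ^ k * (((q - 1) * k + 1 : ℕ) : K) ^ (k - 1))
      ∧ (∀ k : ℕ, 2 ≤ k →
        d k = (q : K) ^ k * (((q - 1) * k + 1 : ℕ) : K) ^ (k - 2))
      ∧ d 1 = 1 := by
  have hpos (k : ℕ) : (((q - 1) * k + 1 : ℕ) : K) ≠ 0 :=
    Nat.cast_ne_zero.mpr (Nat.succ_ne_zero _)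
  have hmul (k : ℕ) (hk : 1 ≤ k) :
      (((q - 1) * k + 1 : ℕ) : K) * d k = (q : K) ^ k * (((q - 1) * k + 1 : ℕ) : K) ^ (k - 1) := by
    rw [hd k hk, mul_div_cancel₀ _ (hpos k), eq_closedForm_of_chain_recurrence hq h0 hrec,
      mul_div_cancel₀ _ (Nat.cast_ne_zero.mpr k.factorial_ne_zero)]
  refine ⟨hmul, fun k hk ↦ mul_left_cancel₀ (hpos k) ?_, mul_left_cancel₀ (hpos 1) ?_⟩
  · rw [hmul k (by omega), show k - 1 = k - 2 + 1 by omega, pow_succ]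
    ring
  · rw [hmul 1 le_rfl]
    simp [Nat.sub_add_cancel hq]

/-- With `q ≥ 2`, `h` defined by the recurrence of the paper and
`d k := k!·h k/((q-1)k+1)` for `k ≥ 1`, we have
`((q-1)k+1)·d k = q^k·((q-1)k+1)^(k-1)` for all `k ≥ 1`; equivalently
`d k = q^k·((q-1)k+1)^(k-2)` for `k ≥ 2` and `d 1 = 1`. -/
theorem stmt_1 (q : ℕ) (hq : 2 ≤ q) (h : ℕ → ℚ)
    (h0 : h 0 = 1)
    (hrec : ∀ k : ℕ, 1 ≤ k →
      h k = ((((q - 1) * k + 1 : ℕ) : ℚ) / (k : ℚ)) *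
        ∑ j ∈ Finset.Nat.antidiagonalTuple q (k - 1), ∏ i : Fin q, h (j i))
    (d : ℕ → ℚ)
    (hd : ∀ k : ℕ, 1 ≤ k →
      d k = (Nat.factorial k : ℚ) * h k / (((q - 1) * k + 1 : ℕ) : ℚ)) :
    (∀ k : ℕ, 1 ≤ k →
        (((q - 1) * k + 1 : ℕ) : ℚ) * d k = (q : ℚ) ^ k * (((q - 1) * k + 1 : ℕ) : ℚ) ^ (k - 1))
      ∧ (∀ k : ℕ, 2 ≤ k →
        d k = (q : ℚ) ^ k * (((q - 1) * k + 1 : ℕ) : ℚ) ^ (k - 2))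
      ∧ d 1 = 1 := by
  exact stmt_1_general q (one_le_two.trans hq) h h0 hrec d hd
end

section
/- Fix an integer q ≥ 2 and let H = Σ_{k≥0} h_k z^k ∈ ℚ[[z]] with h_k = q^k·((q-1)k+1)^{k-1}/k!. Then H satisfies the formal differential equation H′·(1 − q(q-1)·z·H^{q-1}) = q·H^q, where H′ denotes the formal derivative of H. -/
open PowerSeries

/-!
`H` is a power of the generalized exponential series `𝓔_t(z) = ∑ (1 + t k)^(k-1) z^k / k!`.
Write `F_a = ∑ a (a + t k)^(k-1) z^k / k!` for the power `𝓔_t^a` and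
`G_a = ∑ (a + t k)^k z^k / k!`. Comparing coefficients, `F_a′ = a G_(a+t)` and
`G_a = F_a + t z G_(a+t)`. The addition laws `F_a F_b = F_(a+b)` and `F_a G_b = G_(a+b)` follow by a
simultaneous induction on the degree: the product rule carries the second law in degree `n` to the
first in degree `n + 1`, and the recurrence for `G_b` then gives the second in degree `n + 1`.
Hence `G_a (1 - t z F_t) = F_a` and `F_a′ (1 - t z F_t) = a F_(a+t)`. For `t = q (q - 1)` and
`a = q` one has `H = F_a`, `H^(q-1) = F_t` and `H^q = F_(a+t)`.
-/

section GeneralizedExponential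

variable {R : Type*} [CommRing R] [Algebra ℚ R]

/-- The exponential generating function `∑ f n z^n / n!` of a sequence `f`. -/
noncomputable def egf (f : ℕ → R) : R⟦X⟧ :=
  mk fun n => (n.factorial : ℚ)⁻¹ • f n

theorem coeff_egf (f : ℕ → R) (n : ℕ) : coeff n (egf f) = (n.factorial : ℚ)⁻¹ • f n :=
  coeff_mk n _

theorem inv_factorial_succ_smul_succ_mul (n : ℕ) (x : R) :
    ((n + 1).factorial : ℚ)⁻¹ • (((n : R) + 1) * x) = (n.factorial : ℚ)⁻¹ • x := by
  have cast_smul : ((n : R) + 1) * x = ((n : ℚ) + 1) • x := by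
    simp only [Algebra.smul_def, map_add, map_natCast, map_one]
  have succ_ne_zero : (n : ℚ) + 1 ≠ 0 := n.cast_add_one_ne_zero
  rw [cast_smul, smul_smul, Nat.factorial_succ, Nat.cast_mul, Nat.cast_succ, mul_inv_rev,
    inv_mul_cancel_right₀ succ_ne_zero]

theorem derivative_egf (f : ℕ → R) :
    derivative R (egf f) = egf fun n => f (n + 1) := by
  ext n
  rw [coeff_derivative, coeff_egf, coeff_egf, smul_mul_assoc, mul_comm,
    inv_factorial_succ_smul_succ_mul]

theorem X_mul_egf (f : ℕ → R) : X * egf f = egf fun n => n * f (n - 1) := by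
  ext n
  cases n with
  | zero => simp [coeff_egf]
  | succ n =>
    rw [coeff_succ_X_mul, coeff_egf, coeff_egf, Nat.cast_succ, Nat.add_sub_cancel,
      inv_factorial_succ_smul_succ_mul]

/-- The power `𝓔_t(z)^a = ∑ a (a + t n)^(n-1) z^n / n!` of the generalized exponential series
`𝓔_t(z)`; the constant term, formally `a * a⁻¹`, is `1`. -/
noncomputable def generalizedExp (t a : R) : R⟦X⟧ :=
  egf fun
    | 0 => 1
    | n + 1 => a * (a + t * (n + 1)) ^ n

/-- The series `∑ (a + t n)^n z^n / n!`, equal to the quotient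
`𝓔_t(z)^a / (1 - t z 𝓔_t(z)^t)`. -/
noncomputable def generalizedExpQuot (t a : R) : R⟦X⟧ :=
  egf fun n => (a + t * n) ^ n

theorem constantCoeff_generalizedExp (t a : R) :
    constantCoeff (generalizedExp t a) = 1 := by
  simp [generalizedExp, ← coeff_zero_eq_constantCoeff_apply, coeff_egf]

theorem constantCoeff_generalizedExpQuot (t a : R) :
    constantCoeff (generalizedExpQuot t a) = 1 := by
  simp [generalizedExpQuot, ← coeff_zero_eq_constantCoeff_apply, coeff_egf]

theorem generalizedExp_zero_right (t : R) : generalizedExp t 0 = 1 := by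
  ext n
  cases n <;> simp [generalizedExp, coeff_egf, coeff_one]

theorem derivative_generalizedExp (t a : R) :
    derivative R (generalizedExp t a) = C a * generalizedExpQuot t (a + t) := by
  ext n
  have shift : a + t * ((n : R) + 1) = a + t + t * n := by ring
  simp only [generalizedExp, derivative_egf, generalizedExpQuot, coeff_C_mul, coeff_egf,
    mul_smul_comm, shift]

theorem generalizedExpQuot_eq_add (t a : R) :
    generalizedExpQuot t a = generalizedExp t a + C t * (X * generalizedExpQuot t (a + t)) := by
  ext n
  rw [generalizedExpQuot, generalizedExp, generalizedExpQuot, X_mul_egf, map_add, coeff_C_mul,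
    coeff_egf, coeff_egf, coeff_egf, mul_smul_comm, ← smul_add]
  congr 1
  cases n with
  | zero => simp
  | succ n =>
    rw [Nat.add_sub_cancel]
    push_cast
    ring

theorem coeff_succ_generalizedExp_mul {t : R} {n : ℕ}
    (hn : ∀ a b : R, coeff n (generalizedExp t a * generalizedExpQuot t b) =
      coeff n (generalizedExpQuot t (a + b))) (a b : R) :
    coeff (n + 1) (generalizedExp t a * generalizedExp t b) =
      coeff (n + 1) (generalizedExp t (a + b)) := by
  have succ_isUnit : IsUnit ((n : R) + 1) := by
    simpa using (n.cast_add_one_ne_zero (R := ℚ)).isUnit.map (algebraMap ℚ R)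
  have leibniz : derivative R (generalizedExp t a * generalizedExp t b) =
      C b * (generalizedExp t a * generalizedExpQuot t (b + t)) +
        C a * (generalizedExp t b * generalizedExpQuot t (a + t)) := by
    rw [Derivation.leibniz, derivative_generalizedExp, derivative_generalizedExp, smul_eq_mul,
      smul_eq_mul]
    ring
  apply succ_isUnit.mul_right_cancel
  rw [← coeff_derivative, ← coeff_derivative, leibniz, derivative_generalizedExp, map_add,
    coeff_C_mul, coeff_C_mul, coeff_C_mul, hn, hn, add_left_comm b a t, ← add_assoc]
  ring

theorem coeff_generalizedExp_mul_generalizedExpQuot (t : R) (n : ℕ) (a b : R) :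
    coeff n (generalizedExp t a * generalizedExpQuot t b) =
      coeff n (generalizedExpQuot t (a + b)) := by
  induction n generalizing a b with
  | zero =>
    simp only [coeff_zero_eq_constantCoeff, map_mul, constantCoeff_generalizedExp,
      constantCoeff_generalizedExpQuot, one_mul]
  | succ n ih =>
    have expand : generalizedExp t a * generalizedExpQuot t b =
        generalizedExp t a * generalizedExp t b +
          C t * (X * (generalizedExp t a * generalizedExpQuot t (b + t))) := by
      rw [generalizedExpQuot_eq_add t b]
      ring
    rw [expand, generalizedExpQuot_eq_add t (a + b), map_add, map_add,
      coeff_succ_generalizedExp_mul ih, coeff_C_mul, coeff_C_mul, coeff_succ_X_mul,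
      coeff_succ_X_mul, ih, add_assoc]

theorem generalizedExp_mul_generalizedExpQuot (t a b : R) :
    generalizedExp t a * generalizedExpQuot t b = generalizedExpQuot t (a + b) :=
  PowerSeries.ext fun n => coeff_generalizedExp_mul_generalizedExpQuot t n a b

theorem generalizedExp_add (t a b : R) :
    generalizedExp t (a + b) = generalizedExp t a * generalizedExp t b := by
  ext n
  cases n with
  | zero =>
    simp only [coeff_zero_eq_constantCoeff, map_mul, constantCoeff_generalizedExp, one_mul]
  | succ n =>
    exact (coeff_succ_generalizedExp_mul
      (coeff_generalizedExp_mul_generalizedExpQuot t n) a b).symm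

theorem generalizedExp_natCast_mul (t a : R) (n : ℕ) :
    generalizedExp t (n * a) = generalizedExp t a ^ n := by
  induction n with
  | zero => rw [Nat.cast_zero, zero_mul, generalizedExp_zero_right, pow_zero]
  | succ n ih => rw [Nat.cast_succ, add_one_mul, generalizedExp_add, ih, pow_succ]

theorem generalizedExpQuot_mul_one_sub (t a : R) :
    generalizedExpQuot t a * (1 - C t * (X * generalizedExp t t)) = generalizedExp t a := by
  have recurrence := generalizedExpQuot_eq_add t a
  rw [add_comm a t, ← generalizedExp_mul_generalizedExpQuot] at recurrence
  linear_combination recurrence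

theorem derivative_generalizedExp_mul_one_sub (t a : R) :
    derivative R (generalizedExp t a) * (1 - C t * (X * generalizedExp t t)) =
      C a * generalizedExp t (a + t) := by
  rw [derivative_generalizedExp, mul_assoc, generalizedExpQuot_mul_one_sub]

theorem egf_pow_mul_pow_eq_generalizedExp (p : ℕ) (c : R) :
    egf (fun k => c ^ k * ((p * k + 1 : ℕ) : R) ^ (k - 1)) = generalizedExp (p * c) c := by
  rw [generalizedExp]
  congr 1
  funext k
  cases k with
  | zero => simp
  | succ k =>
    have factor : c + p * c * (k + 1) = c * ((p * (k + 1) + 1 : ℕ) : R) := by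
      push_cast
      ring
    simp only [Nat.add_sub_cancel, factor, mul_pow, pow_succ']
    ring

end GeneralizedExponential

theorem stmt_7_general {R : Type*} [CommRing R] [Algebra ℚ R] (p : ℕ) (c : R) (H : R⟦X⟧)
    (hH : H = egf fun k => c ^ k * ((p * k + 1 : ℕ) : R) ^ (k - 1)) :
    derivative R H * (1 - (p * c) • (X * H ^ p)) = c • H ^ (p + 1) := by
  have H_eq : H = generalizedExp (p * c) c := hH.trans (egf_pow_mul_pow_eq_generalizedExp p c)
  have pow_p : H ^ p = generalizedExp (p * c) (p * c) := by
    rw [H_eq, generalizedExp_natCast_mul]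
  have pow_succ_p : H ^ (p + 1) = generalizedExp (p * c) (c + p * c) := by
    rw [pow_succ', pow_p, H_eq, generalizedExp_add]
  rw [pow_p, pow_succ_p, H_eq, smul_eq_C_mul, smul_eq_C_mul,
    derivative_generalizedExp_mul_one_sub]

/-- For `q ≥ 2`, the power series `H = ∑ h_k z^k` with
`h_k = q^k((q-1)k+1)^(k-1)/k!` satisfies the formal differential equation
`H′·(1 − q(q-1)·z·H^(q-1)) = q·H^q`. -/
theorem stmt_7 (q : ℕ) (hq : 2 ≤ q)
    (H : PowerSeries ℚ)
    (hH : H = PowerSeries.mk fun k =>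
      (q : ℚ) ^ k * (((q - 1) * k + 1 : ℕ) : ℚ) ^ (k - 1) / (Nat.factorial k : ℚ)) :
    (PowerSeries.derivative ℚ H) *
        (1 - ((q * (q - 1) : ℕ) : ℚ) • (PowerSeries.X * H ^ (q - 1)))
      = ((q : ℕ) : ℚ) • (H ^ q) := by
  obtain ⟨p, rfl⟩ : ∃ p, q = p + 1 := ⟨q - 1, by omega⟩
  simpa [mul_comm] using stmt_7_general p ((p + 1 : ℕ) : ℚ) H
    (hH.trans (by simp only [egf, smul_eq_mul, div_eq_inv_mul, Nat.add_sub_cancel]))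
end
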